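/- Suppose d^D = d^{π_D}, B_w > 1, and |f'(x)| ≤ B_{f'} for all 0 ≤ x ≤ B_w. Then the optimal dual variable of the constrained & regularized LP satisfies ‖v*_{α,B_w}‖_∞ ≤ (α·B_{f'} + 1)/(1−γ). -/

import Mathlib

open MeasureTheory
open scoped BigOperators ENNReal

namespace ProRL

/-- The discrete measure on a type induced by a real-valued weight function. -/
noncomputable def discMeasure {X : Type*} [MeasurableSpace X] (p : X → ℝ) : Measure X :=
  Measure.sum fun x => ENNReal.ofReal (p x) • Measure.dirac x

variable {S A : Type*} [Fintype S] [Fintype A]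

/-- The `t`-step state-action distribution of policy `π` started from `μ0`. -/
noncomputable def saDist (P : S → A → S → ℝ) (μ0 : S → ℝ) (π : S → A → ℝ) :
    ℕ → S → A → ℝ
  | 0 => fun s a => μ0 s * π s a
  | t + 1 => fun s a =>
      (∑ s' : S, ∑ a' : A, saDist P μ0 π t s' a' * P s' a' s) * π s a

/-- The discounted state-action occupancy `d^π(s,a)`. -/
noncomputable def occ (P : S → A → S → ℝ) (μ0 : S → ℝ) (γ : ℝ) (π : S → A → ℝ)
    (s : S) (a : A) : ℝ :=
  (1 - γ) * ∑' t : ℕ, γ ^ t * saDist P μ0 π t s a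

/-- The (normalized) expected discounted return `J(π) = E_{d^π}[r]`. -/
noncomputable def Jret (P : S → A → S → ℝ) (r : S → A → ℝ) (μ0 : S → ℝ) (γ : ℝ)
    (π : S → A → ℝ) : ℝ :=
  ∑ s : S, ∑ a : A, occ P μ0 γ π s a * r s a

/-- `π` is a (stationary, stochastic) policy. -/
def IsPolicy (π : S → A → ℝ) : Prop :=
  (∀ s a, 0 ≤ π s a) ∧ ∀ s, ∑ a : A, π s a = 1

/-- The Bellman residual `e_v(s,a) = r(s,a) + γ ∑_{s'} P(s'|s,a) v(s') − v(s)`. -/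
noncomputable def eV (P : S → A → S → ℝ) (r : S → A → ℝ) (γ : ℝ) (v : S → ℝ)
    (s : S) (a : A) : ℝ :=
  r s a + γ * ∑ s' : S, P s a s' * v s' - v s

/-- The population Lagrangian `L_α(v,w)`. -/
noncomputable def Lag (P : S → A → S → ℝ) (r : S → A → ℝ) (μ0 : S → ℝ) (γ : ℝ)
    (dD : S → A → ℝ) (f : ℝ → ℝ) (α : ℝ) (v : S → ℝ) (w : S → A → ℝ) : ℝ :=
  (1 - γ) * ∑ s : S, μ0 s * v s
    - α * ∑ s : S, ∑ a : A, dD s a * f (w s a)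
    + ∑ s : S, ∑ a : A, dD s a * (w s a * eV P r γ v s a)

/-- The empirical Lagrangian `L̂_α(v,w)` built from the transition dataset `D`
(`D i = ((sᵢ,aᵢ), s'ᵢ)`, with `rᵢ = r sᵢ aᵢ`) and initial-state dataset `D0`. -/
noncomputable def empLag (r : S → A → ℝ) (γ : ℝ) (f : ℝ → ℝ) (α : ℝ) {n n0 : ℕ}
    (D : Fin n → (S × A) × S) (D0 : Fin n0 → S) (v : S → ℝ) (w : S → A → ℝ) : ℝ :=
  (1 - γ) * ((n0 : ℝ)⁻¹ * ∑ j : Fin n0, v (D0 j))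
    - α * ((n : ℝ)⁻¹ * ∑ i : Fin n, f (w (D i).1.1 (D i).1.2))
    + (n : ℝ)⁻¹ * ∑ i : Fin n,
        w (D i).1.1 (D i).1.2 *
          (r (D i).1.1 (D i).1.2 + γ * v (D i).2 - v (D i).1.1)

/-- Per-state normalization of a state-action weight into a policy
(uniform where the state marginal is not positive). -/
noncomputable def normPolicy (d : S → A → ℝ) (s : S) (a : A) : ℝ :=
  if 0 < ∑ a' : A, d s a' then d s a / ∑ a' : A, d s a'
  else (Fintype.card A : ℝ)⁻¹

/-- Policy extraction from a density ratio `w` and a behavior policy `piD`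
(uniform where the normalizer vanishes). -/
noncomputable def extractPolicy (piD w : S → A → ℝ) (s : S) (a : A) : ℝ :=
  if 0 < ∑ a' : A, w s a' * piD s a' then
    w s a * piD s a / ∑ a' : A, w s a' * piD s a'
  else (Fintype.card A : ℝ)⁻¹

/-- Behavior policy `π_D(a|s)` obtained from the data distribution `d^D`. -/
noncomputable def behPolicy (dD : S → A → ℝ) : S → A → ℝ := normPolicy dD

/-- The state-action measure `d(s,a) = w(s,a)·d^D(s,a)`. -/
noncomputable def dstar (dD w : S → A → ℝ) : S → A → ℝ := fun s a => w s a * dD s a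

/-- The weighted `L²(d^D)` norm of a state-action function. -/
noncomputable def l2nrm (dD g : S → A → ℝ) : ℝ :=
  Real.sqrt (∑ s : S, ∑ a : A, dD s a * g s a ^ 2)

/-- `‖π(·|s) − π'(·|s)‖₁`. -/
noncomputable def l1Pol (π π' : S → A → ℝ) (s : S) : ℝ := ∑ a : A, |π s a - π' s a|

/-- `E_{s ∼ d}[‖π(·|s) − π'(·|s)‖₁]` where `d` is a state-action distribution. -/
noncomputable def expL1 (d π π' : S → A → ℝ) : ℝ :=
  ∑ s : S, (∑ a : A, d s a) * l1Pol π π' s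

/-- The statistical error term `ε_stat`. -/
noncomputable def epsStat (γ α Bv Bf Bw Be δ : ℝ) (nV nW n n0 : ℕ) : ℝ :=
  (1 - γ) * Bv * Real.sqrt (2 * Real.log (4 * (nV : ℝ) / δ) / (n0 : ℝ))
    + (α * Bf + Bw * Be) *
        Real.sqrt (2 * Real.log (4 * ((nV : ℝ) * (nW : ℝ)) / δ) / (n : ℝ))

/-- The Bellman flow equations for a state-action measure `d`. -/
def BellmanFlow (P : S → A → S → ℝ) (μ0 : S → ℝ) (γ : ℝ) (d : S → A → ℝ) : Prop :=
  ∀ s : S, ∑ a : A, d s a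
    = (1 - γ) * μ0 s + γ * ∑ s' : S, ∑ a' : A, P s' a' s * d s' a'

/-- `(v,w)` is a saddle point of `max_{w ≥ 0} min_v L_α(v,w)`. -/
def IsSaddle (P : S → A → S → ℝ) (r : S → A → ℝ) (μ0 : S → ℝ) (γ : ℝ)
    (dD : S → A → ℝ) (f : ℝ → ℝ) (α : ℝ) (v : S → ℝ) (w : S → A → ℝ) : Prop :=
  (∀ s a, 0 ≤ w s a) ∧
  (∀ v' : S → ℝ, Lag P r μ0 γ dD f α v w ≤ Lag P r μ0 γ dD f α v' w) ∧
  (∀ w' : S → A → ℝ, (∀ s a, 0 ≤ w' s a) →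
    Lag P r μ0 γ dD f α v w' ≤ Lag P r μ0 γ dD f α v w)

/-- `(v,w)` is a saddle point of `max_{0 ≤ w ≤ Bw} min_v L_α(v,w)` (constrained LP). -/
def IsSaddleB (P : S → A → S → ℝ) (r : S → A → ℝ) (μ0 : S → ℝ) (γ : ℝ)
    (dD : S → A → ℝ) (f : ℝ → ℝ) (α Bw : ℝ) (v : S → ℝ) (w : S → A → ℝ) : Prop :=
  (∀ s a, 0 ≤ w s a ∧ w s a ≤ Bw) ∧
  (∀ v' : S → ℝ, Lag P r μ0 γ dD f α v w ≤ Lag P r μ0 γ dD f α v' w) ∧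
  (∀ w' : S → A → ℝ, (∀ s a, 0 ≤ w' s a ∧ w' s a ≤ Bw) →
    Lag P r μ0 γ dD f α v w' ≤ Lag P r μ0 γ dD f α v w)

/-- `(vhat, what)` is an exact max-min point of the empirical Lagrangian over `V × W`:
`vhat ∈ argmin_{v ∈ V} L̂(v, what)` and `what ∈ argmax_{w ∈ W} min_{v ∈ V} L̂(v, w)`. -/
def IsProRLOutput (r : S → A → ℝ) (γ : ℝ) (f : ℝ → ℝ) (α : ℝ)
    (V : Finset (S → ℝ)) (W : Finset (S → A → ℝ)) {n n0 : ℕ}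
    (D : Fin n → (S × A) × S) (D0 : Fin n0 → S)
    (vhat : S → ℝ) (what : S → A → ℝ) : Prop :=
  vhat ∈ V ∧ what ∈ W ∧
  (∀ v ∈ V, empLag r γ f α D D0 vhat what ≤ empLag r γ f α D D0 v what) ∧
  ∀ w ∈ W, ∀ vw ∈ V,
    (∀ v ∈ V, empLag r γ f α D D0 vw w ≤ empLag r γ f α D D0 v w) →
      empLag r γ f α D D0 vw w ≤ empLag r γ f α D D0 vhat what

/-- Weight of a transition tuple `((s,a),s')` under `(s,a) ∼ d^D`, `s' ∼ P(·|s,a)`. -/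
noncomputable def tupleWeight (P : S → A → S → ℝ) (dD : S → A → ℝ)
    (x : (S × A) × S) : ℝ :=
  dD x.1.1 x.1.2 * P x.1.1 x.1.2 x.2

/-- The joint law of the transition dataset `D` (i.i.d. from `d^D ⊗ P`) and the
initial-state dataset `D0` (i.i.d. from `μ0`). -/
noncomputable def dataMeasure [MeasurableSpace S] [MeasurableSpace A]
    (P : S → A → S → ℝ) (dD : S → A → ℝ) (μ0 : S → ℝ) (n n0 : ℕ) :
    Measure ((Fin n → (S × A) × S) × (Fin n0 → S)) :=
  (Measure.pi fun _ : Fin n => discMeasure (tupleWeight P dD)).prod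
    (Measure.pi fun _ : Fin n0 => discMeasure μ0)

/-- The joint law of datasets `D1`, `D2` (both i.i.d. from `d^D ⊗ P`) and `D0`
(i.i.d. from `μ0`), used by PRO-RL-BC. -/
noncomputable def dataMeasure3 [MeasurableSpace S] [MeasurableSpace A]
    (P : S → A → S → ℝ) (dD : S → A → ℝ) (μ0 : S → ℝ) (n1 n2 n0 : ℕ) :
    Measure ((Fin n1 → (S × A) × S) × (Fin n2 → (S × A) × S) × (Fin n0 → S)) :=
  (Measure.pi fun _ : Fin n1 => discMeasure (tupleWeight P dD)).prod
    ((Measure.pi fun _ : Fin n2 => discMeasure (tupleWeight P dD)).prod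
      (Measure.pi fun _ : Fin n0 => discMeasure μ0))

/-- `v` is the optimal value function: it satisfies the Bellman optimality equation. -/
def IsOptValue [Nonempty A] (P : S → A → S → ℝ) (r : S → A → ℝ) (γ : ℝ)
    (v : S → ℝ) : Prop :=
  ∀ s : S, v s = Finset.univ.sup' Finset.univ_nonempty
    (fun a : A => r s a + γ * ∑ s' : S, P s a s' * v s')

/-- Basic assumptions on the MDP, the regularizer-free data, and the data distribution. -/
structure MDPAssumptions (P : S → A → S → ℝ) (r : S → A → ℝ) (μ0 : S → ℝ) (γ : ℝ)
    (dD : S → A → ℝ) : Prop where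
  P_nonneg : ∀ s a s', 0 ≤ P s a s'
  P_sum : ∀ s a, ∑ s' : S, P s a s' = 1
  r_nonneg : ∀ s a, 0 ≤ r s a
  r_le_one : ∀ s a, r s a ≤ 1
  γ_nonneg : 0 ≤ γ
  γ_lt_one : γ < 1
  μ0_pos : ∀ s, 0 < μ0 s
  μ0_sum : ∑ s : S, μ0 s = 1
  dD_nonneg : ∀ s a, 0 ≤ dD s a
  dD_sum : ∑ s : S, ∑ a : A, dD s a = 1

/-- Regularity of the regularizer `f`: continuously differentiable with derivative `f'`,
`M_f`-strongly convex, and with `|f'| ≤ Bf'`, `|f| ≤ Bf` on `[0, Bw]`. -/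
structure RegAssumptions (f f' : ℝ → ℝ) (Mf Bw Bf' Bf : ℝ) : Prop where
  deriv : ∀ x, HasDerivAt f (f' x) x
  strong : StrongConvexOn Set.univ Mf f
  Mf_pos : 0 < Mf
  f'_bdd : ∀ x, 0 ≤ x → x ≤ Bw → |f' x| ≤ Bf'
  f_bdd : ∀ x, 0 ≤ x → x ≤ Bw → |f x| ≤ Bf

/-- `w` is an optimal density ratio of the unregularized LP (the set `W*₀`). -/
def OptRatio (P : S → A → S → ℝ) (r : S → A → ℝ) (μ0 : S → ℝ) (γ : ℝ)
    (dD : S → A → ℝ) (w : S → A → ℝ) : Prop :=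
  (∀ s a, 0 ≤ w s a) ∧ BellmanFlow P μ0 γ (dstar dD w) ∧
  ∀ w' : S → A → ℝ, (∀ s a, 0 ≤ w' s a) → BellmanFlow P μ0 γ (dstar dD w') →
    ∑ s : S, ∑ a : A, dstar dD w' s a * r s a
      ≤ ∑ s : S, ∑ a : A, dstar dD w s a * r s a

/-!
The flow equations are jointly linear in the occupancy and the initial mass. At the saddle point both
`w*·d^D` (stationarity in `v`) and `d^D` (an occupancy) satisfy them, so the slack
`(B_w − w*)·d^D` is again a nonnegative flow, with initial mass `(B_w − 1)·μ0 > 0`. A nonnegative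
flow with positive initial mass charges an action at every state. Hence every state has an action
at which `w* > 0` and one at which `w* < B_w`, and optimality of `w*` there bounds the Bellman
residual `e_{v*}` below by `−α·B_{f'}` and above by `α·B_{f'}` respectively. The first bound at a
maximizer of `v*` and the second at a minimizer yield the claim, since averaging under `P` cannot
exceed the extreme values.
-/

section Occupancy

variable {P : S → A → S → ℝ} {μ0 : S → ℝ} {γ : ℝ} {π : S → A → ℝ}

omit [Fintype S] in
theorem isPolicy_normPolicy [Nonempty A] {d : S → A → ℝ} (hd : ∀ s a, 0 ≤ d s a) :
    IsPolicy (normPolicy d) := by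
  refine ⟨fun s a => ?_, fun s => ?_⟩ <;> unfold normPolicy <;> split_ifs with h
  · exact div_nonneg (hd s a) h.le
  · positivity
  · rw [← Finset.sum_div, div_self h.ne']
  · simp

theorem sum_saDist_zero (hπ : IsPolicy π) (s : S) : ∑ a, saDist P μ0 π 0 s a = μ0 s := by
  simp only [saDist, ← Finset.mul_sum, hπ.2 s, mul_one]

theorem sum_saDist_succ (hπ : IsPolicy π) (t : ℕ) (s : S) :
    ∑ a, saDist P μ0 π (t + 1) s a = ∑ s', ∑ a', saDist P μ0 π t s' a' * P s' a' s := by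
  simp only [saDist, ← Finset.mul_sum, hπ.2 s, mul_one]

omit [Fintype S] in
theorem sum_abs_mul_policy (hπ : IsPolicy π) (c : ℝ) (s : S) : ∑ a, |c * π s a| = |c| := by
  simp only [abs_mul, abs_of_nonneg (hπ.1 s _), ← Finset.mul_sum, hπ.2 s, mul_one]

theorem sum_abs_saDist_le (hP : ∀ s a, P s a ∈ stdSimplex ℝ S) (hπ : IsPolicy π) (t : ℕ) :
    ∑ s, ∑ a, |saDist P μ0 π t s a| ≤ ∑ s, |μ0 s| := by
  induction t with
  | zero => simp only [saDist, sum_abs_mul_policy hπ, le_refl]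
  | succ t ih =>
    calc ∑ s, ∑ a, |saDist P μ0 π (t + 1) s a|
        = ∑ s, |∑ s', ∑ a', saDist P μ0 π t s' a' * P s' a' s| := by
          simp only [saDist, sum_abs_mul_policy hπ]
      _ ≤ ∑ s, ∑ s', ∑ a', |saDist P μ0 π t s' a'| * P s' a' s := by
          refine Finset.sum_le_sum fun s _ => (Finset.abs_sum_le_sum_abs _ _).trans <|
            Finset.sum_le_sum fun s' _ => (Finset.abs_sum_le_sum_abs _ _).trans_eq ?_
          simp only [abs_mul, abs_of_nonneg ((hP _ _).1 s)]
      _ = ∑ s', ∑ a', |saDist P μ0 π t s' a'| := by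
          rw [Finset.sum_comm]
          refine Finset.sum_congr rfl fun s' _ => ?_
          rw [Finset.sum_comm]
          simp only [← Finset.mul_sum, (hP s' _).2, mul_one]
      _ ≤ ∑ s, |μ0 s| := ih

theorem abs_saDist_le (hP : ∀ s a, P s a ∈ stdSimplex ℝ S) (hπ : IsPolicy π) (t : ℕ)
    (s : S) (a : A) : |saDist P μ0 π t s a| ≤ ∑ s, |μ0 s| :=
  calc |saDist P μ0 π t s a| ≤ ∑ a, |saDist P μ0 π t s a| :=
        Finset.single_le_sum (f := fun a => |saDist P μ0 π t s a|)
          (fun _ _ => abs_nonneg _) (Finset.mem_univ a)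
    _ ≤ ∑ s, ∑ a, |saDist P μ0 π t s a| :=
        Finset.single_le_sum (f := fun s => ∑ a, |saDist P μ0 π t s a|)
          (fun _ _ => Finset.sum_nonneg fun _ _ => abs_nonneg _) (Finset.mem_univ s)
    _ ≤ ∑ s, |μ0 s| := sum_abs_saDist_le hP hπ t

theorem hasSum_occ (hP : ∀ s a, P s a ∈ stdSimplex ℝ S) (hπ : IsPolicy π) (hγ0 : 0 ≤ γ)
    (hγ1 : γ < 1) (s : S) (a : A) :
    HasSum (fun t => (1 - γ) * (γ ^ t * saDist P μ0 π t s a)) (occ P μ0 γ π s a) := by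
  have hsummable : Summable fun t => γ ^ t * saDist P μ0 π t s a := by
    refine ((summable_geometric_of_lt_one hγ0 hγ1).mul_right (∑ s, |μ0 s|)).of_norm_bounded
      fun t => ?_
    rw [norm_mul, norm_pow, Real.norm_of_nonneg hγ0]
    exact mul_le_mul_of_nonneg_left (abs_saDist_le hP hπ t s a) (pow_nonneg hγ0 t)
  exact hsummable.hasSum.mul_left (1 - γ)

theorem bellmanFlow_occ (hP : ∀ s a, P s a ∈ stdSimplex ℝ S) (hπ : IsPolicy π) (hγ0 : 0 ≤ γ)
    (hγ1 : γ < 1) : BellmanFlow P μ0 γ (occ P μ0 γ π) := by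
  intro s
  have hocc := hasSum_occ (μ0 := μ0) hP hπ hγ0 hγ1
  have houtflow : HasSum (fun t => (1 - γ) * (γ ^ t * ∑ a, saDist P μ0 π t s a))
      (∑ a, occ P μ0 γ π s a) := by
    simpa only [Finset.mul_sum] using hasSum_sum fun a (_ : a ∈ Finset.univ) => hocc s a
  have hinflow : HasSum (fun t => (1 - γ) * (γ ^ (t + 1) * ∑ a, saDist P μ0 π (t + 1) s a))
      (γ * ∑ s', ∑ a', P s' a' s * occ P μ0 γ π s' a') := by
    refine ((hasSum_sum fun s' (_ : s' ∈ Finset.univ) =>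
      hasSum_sum fun a' (_ : a' ∈ Finset.univ) =>
        (hocc s' a').mul_left (P s' a' s)).mul_left γ).congr_fun fun t => ?_
    simp only [sum_saDist_succ hπ, Finset.mul_sum]
    refine Finset.sum_congr rfl fun s' _ => Finset.sum_congr rfl fun a' _ => ?_
    ring
  simpa only [pow_zero, one_mul, sum_saDist_zero hπ] using houtflow.unique hinflow.zero_add

end Occupancy

section Flow

variable {P : S → A → S → ℝ} {μ ν : S → ℝ} {γ : ℝ} {d e : S → A → ℝ}

/-- The defect of the Bellman flow equation of `d` at each state: inflow minus outflow. It is the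
gradient of the Lagrangian in the dual variable. -/
def flowResidual (P : S → A → S → ℝ) (μ : S → ℝ) (γ : ℝ) (d : S → A → ℝ) (s : S) : ℝ :=
  (1 - γ) * μ s + γ * ∑ s', ∑ a', P s' a' s * d s' a' - ∑ a, d s a

theorem bellmanFlow_iff_flowResidual_eq_zero :
    BellmanFlow P μ γ d ↔ ∀ s, flowResidual P μ γ d s = 0 :=
  forall_congr' fun _ => eq_comm.trans sub_eq_zero.symm

theorem BellmanFlow.smul_sub (hd : BellmanFlow P μ γ d) (he : BellmanFlow P ν γ e) (c : ℝ) :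
    BellmanFlow P (c • μ - ν) γ (c • d - e) := by
  intro s
  simp only [Pi.sub_apply, Pi.smul_apply, smul_eq_mul, mul_sub, Finset.sum_sub_distrib,
    mul_left_comm _ c, ← Finset.mul_sum]
  rw [hd s, he s]
  ring

theorem BellmanFlow.exists_pos (hflow : BellmanFlow P μ γ d) (hP : ∀ s a s', 0 ≤ P s a s')
    (hγ0 : 0 ≤ γ) (hγ1 : γ < 1) (hd : ∀ s a, 0 ≤ d s a) {s : S} (hμ : 0 < μ s) :
    ∃ a, 0 < d s a := by
  have hinflow : 0 ≤ ∑ s', ∑ a', P s' a' s * d s' a' :=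
    Finset.sum_nonneg fun s' _ => Finset.sum_nonneg fun a' _ => mul_nonneg (hP s' a' s) (hd s' a')
  have hsum : 0 < ∑ a, d s a := by
    rw [hflow s]
    exact add_pos_of_pos_of_nonneg (mul_pos (sub_pos.mpr hγ1) hμ) (mul_nonneg hγ0 hinflow)
  obtain ⟨a, -, ha⟩ := (Finset.sum_pos_iff_of_nonneg fun a _ => hd s a).mp hsum
  exact ⟨a, ha⟩

end Flow

section BellmanResidual

variable {P : S → A → S → ℝ} {r : S → A → ℝ} {γ c R : ℝ} {v : S → ℝ}

omit [Fintype A] in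
theorem eV_neg (s : S) (a : A) : eV P (-r) γ (-v) s a = -eV P r γ v s a := by
  simp only [eV, Pi.neg_apply, mul_neg, Finset.sum_neg_distrib]
  ring

omit [Fintype A] in
theorem le_of_forall_exists_neg_le_eV (hP : ∀ s a, P s a ∈ stdSimplex ℝ S) (hγ0 : 0 ≤ γ)
    (hγ1 : γ < 1) (hr : ∀ s a, r s a ≤ R) (h : ∀ s, ∃ a, -c ≤ eV P r γ v s a) (s : S) :
    v s ≤ (c + R) / (1 - γ) := by
  have : Nonempty S := ⟨s⟩
  obtain ⟨smax, hsmax⟩ := Finite.exists_max v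
  obtain ⟨a, ha⟩ := h smax
  have hmean : ∑ s', P smax a s' * v s' ≤ v smax :=
    (convex_Iic (v smax)).sum_mem (fun s' _ => (hP smax a).1 s') (hP smax a).2
      fun s' _ => hsmax s'
  refine (hsmax s).trans ((le_div_iff₀ (sub_pos.mpr hγ1)).mpr ?_)
  have hdiscount := mul_le_mul_of_nonneg_left hmean hγ0
  unfold eV at ha
  linarith [hr smax a]

omit [Fintype A] in
theorem abs_le_of_forall_exists_eV (hP : ∀ s a, P s a ∈ stdSimplex ℝ S) (hγ0 : 0 ≤ γ)
    (hγ1 : γ < 1) (hr : ∀ s a, |r s a| ≤ R) (hlower : ∀ s, ∃ a, -c ≤ eV P r γ v s a)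
    (hupper : ∀ s, ∃ a, eV P r γ v s a ≤ c) (s : S) : |v s| ≤ (c + R) / (1 - γ) := by
  refine abs_le'.mpr ⟨?_, ?_⟩
  · exact le_of_forall_exists_neg_le_eV hP hγ0 hγ1 (fun s a => (abs_le'.mp (hr s a)).1) hlower s
  · refine le_of_forall_exists_neg_le_eV (r := -r) (v := -v) hP hγ0 hγ1
      (fun s a => (abs_le'.mp (hr s a)).2) (fun s => ?_) s
    simpa only [eV_neg, neg_le_neg_iff] using hupper s

end BellmanResidual

section Lagrangian

variable {P : S → A → S → ℝ} {r : S → A → ℝ} {μ0 : S → ℝ} {γ : ℝ} {dD : S → A → ℝ}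
  {f : ℝ → ℝ} {α : ℝ}

theorem Lag_eq_sum_eV (v : S → ℝ) (w : S → A → ℝ) :
    Lag P r μ0 γ dD f α v w = (1 - γ) * ∑ s, μ0 s * v s
      + ∑ s, ∑ a, dD s a * (w s a * eV P r γ v s a - α * f (w s a)) := by
  simp only [Lag, mul_sub, Finset.sum_sub_distrib, mul_left_comm _ α, ← Finset.mul_sum]
  ring

theorem Lag_eq_sum_flowResidual (v : S → ℝ) (w : S → A → ℝ) :
    Lag P r μ0 γ dD f α v w = ∑ s, v s * flowResidual P μ0 γ (dstar dD w) s
      + ∑ s, ∑ a, dD s a * (w s a * r s a - α * f (w s a)) := by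
  have hinflow : ∑ s, ∑ a, dD s a * (w s a * (γ * ∑ s', P s a s' * v s'))
      = ∑ s', v s' * (γ * ∑ s, ∑ a, P s a s' * dstar dD w s a) := by
    simp only [Finset.mul_sum, dstar]
    rw [Finset.sum_comm_cycle]
    refine Finset.sum_congr rfl fun s' _ => Finset.sum_congr rfl fun s _ =>
      Finset.sum_congr rfl fun a _ => ?_
    ring
  have houtflow : ∑ s, ∑ a, dD s a * (w s a * v s) = ∑ s, v s * ∑ a, dstar dD w s a := by
    simp only [Finset.mul_sum, dstar]
    refine Finset.sum_congr rfl fun s _ => Finset.sum_congr rfl fun a _ => ?_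
    ring
  have hinit : (1 - γ) * ∑ s, μ0 s * v s = ∑ s, v s * ((1 - γ) * μ0 s) := by
    rw [Finset.mul_sum]
    exact Finset.sum_congr rfl fun s _ => by ring
  rw [Lag_eq_sum_eV]
  simp only [flowResidual, eV, mul_add, mul_sub, Finset.sum_add_distrib, Finset.sum_sub_distrib,
    hinflow, houtflow, hinit]
  ring

end Lagrangian

namespace IsSaddleB

variable {P : S → A → S → ℝ} {r : S → A → ℝ} {μ0 : S → ℝ} {γ : ℝ} {dD : S → A → ℝ}
  {f : ℝ → ℝ} {α Bw : ℝ} {v : S → ℝ} {w : S → A → ℝ} {s : S} {a : A} {K : NNReal}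

theorem bellmanFlow (h : IsSaddleB P r μ0 γ dD f α Bw v w) :
    BellmanFlow P μ0 γ (dstar dD w) := by
  obtain ⟨-, hmin, -⟩ := h
  set g := flowResidual P μ0 γ (dstar dD w) with hg
  -- one gradient step of unit length lowers the Lagrangian by `∑ s, g s * g s`
  have hstep := hmin (v - g)
  simp only [Lag_eq_sum_flowResidual, ← hg, Pi.sub_apply, sub_mul, Finset.sum_sub_distrib]
    at hstep
  have hsq : ∑ s, g s * g s = 0 :=
    le_antisymm (by linarith) (Finset.sum_nonneg fun s _ => mul_self_nonneg (g s))
  rw [bellmanFlow_iff_flowResidual_eq_zero]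
  simpa using (Finset.sum_mul_self_eq_zero_iff Finset.univ g).mp hsq

theorem isMaxOn (h : IsSaddleB P r μ0 γ dD f α Bw v w) (hd : 0 < dD s a) :
    IsMaxOn (fun x => x * eV P r γ v s a - α * f x) (Set.Icc 0 Bw) (w s a) := by
  classical
  obtain ⟨hw, -, hmax⟩ := h
  intro x hx
  have hle := hmax (fun s' a' => if s' = s ∧ a' = a then x else w s' a') fun s' a' => by
    split_ifs
    exacts [hx, hw s' a']
  rw [Lag_eq_sum_eV, Lag_eq_sum_eV, add_le_add_iff_left, ← sub_nonneg,
    ← Finset.sum_sub_distrib] at hle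
  simp only [← Finset.sum_sub_distrib] at hle
  rw [Finset.sum_eq_single s (fun s' _ hs => by simp [hs]) (by simp),
    Finset.sum_eq_single a (fun a' _ ha => by simp [ha]) (by simp)] at hle
  simp only [and_self, if_true, ← mul_sub] at hle
  exact sub_nonneg.mp (nonneg_of_mul_nonneg_right hle hd)

theorem sub_mul_eV_le (h : IsSaddleB P r μ0 γ dD f α Bw v w) (hα : 0 ≤ α)
    (hf : LipschitzOnWith K f (Set.Icc 0 Bw)) (hd : 0 < dD s a) {x : ℝ}
    (hx : x ∈ Set.Icc 0 Bw) :
    (x - w s a) * eV P r γ v s a ≤ α * K * |x - w s a| := by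
  have hopt : x * eV P r γ v s a - α * f x ≤ w s a * eV P r γ v s a - α * f (w s a) :=
    h.isMaxOn hd hx
  have hlip : f x - f (w s a) ≤ K * |x - w s a| :=
    (le_abs_self _).trans (hf.dist_le_mul x hx (w s a) (h.1 s a))
  linarith [mul_le_mul_of_nonneg_left hlip hα]

theorem neg_le_eV_of_pos (h : IsSaddleB P r μ0 γ dD f α Bw v w) (hα : 0 ≤ α)
    (hf : LipschitzOnWith K f (Set.Icc 0 Bw)) (hd : 0 < dD s a) (hw : 0 < w s a) :
    -(α * K) ≤ eV P r γ v s a := by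
  have hkkt := h.sub_mul_eV_le hα hf hd ⟨le_rfl, hw.le.trans (h.1 s a).2⟩
  rw [zero_sub, abs_neg, abs_of_pos hw] at hkkt
  exact le_of_mul_le_mul_left (by linarith) hw

theorem eV_le_of_lt (h : IsSaddleB P r μ0 γ dD f α Bw v w) (hα : 0 ≤ α)
    (hf : LipschitzOnWith K f (Set.Icc 0 Bw)) (hd : 0 < dD s a) (hw : w s a < Bw) :
    eV P r γ v s a ≤ α * K := by
  have hkkt := h.sub_mul_eV_le hα hf hd ⟨(h.1 s a).1.trans hw.le, le_rfl⟩
  rw [abs_of_pos (sub_pos.mpr hw)] at hkkt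
  exact le_of_mul_le_mul_left (by linarith) (sub_pos.mpr hw)

theorem exists_pos (h : IsSaddleB P r μ0 γ dD f α Bw v w) (hP : ∀ s a s', 0 ≤ P s a s')
    (hγ0 : 0 ≤ γ) (hγ1 : γ < 1) (hμ : 0 < μ0 s) (hd : ∀ s a, 0 ≤ dD s a) :
    ∃ a, 0 < dD s a ∧ 0 < w s a := by
  obtain ⟨a, ha⟩ := h.bellmanFlow.exists_pos hP hγ0 hγ1
    (fun s a => mul_nonneg (h.1 s a).1 (hd s a)) hμ
  exact ⟨a, pos_of_mul_pos_right ha (h.1 s a).1, pos_of_mul_pos_left ha (hd s a)⟩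

theorem exists_lt (h : IsSaddleB P r μ0 γ dD f α Bw v w) (hP : ∀ s a s', 0 ≤ P s a s')
    (hγ0 : 0 ≤ γ) (hγ1 : γ < 1) (hμ : 0 < μ0 s) (hd : ∀ s a, 0 ≤ dD s a)
    (hflow : BellmanFlow P μ0 γ dD) (hBw : 1 < Bw) : ∃ a, 0 < dD s a ∧ w s a < Bw := by
  have hslack : Bw • dD - dstar dD w = fun s a => (Bw - w s a) * dD s a := by
    funext s a
    exact (sub_mul _ _ _).symm
  have hslack_flow := hslack ▸ hflow.smul_sub h.bellmanFlow Bw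
  obtain ⟨a, ha⟩ := hslack_flow.exists_pos hP hγ0 hγ1
    (fun s a => mul_nonneg (sub_nonneg.mpr (h.1 s a).2) (hd s a))
    (sub_pos.mpr (lt_mul_of_one_lt_left hμ hBw))
  exact ⟨a, pos_of_mul_pos_right ha (sub_nonneg.mpr (h.1 s a).2),
    sub_pos.mp (pos_of_mul_pos_left ha (hd s a))⟩

end IsSaddleB

theorem stmt6_general {P : S → A → S → ℝ} {r : S → A → ℝ} {μ0 : S → ℝ} {γ R : ℝ}
    {dD : S → A → ℝ} {f : ℝ → ℝ} {α Bw : ℝ} {K : NNReal} {v : S → ℝ} {w : S → A → ℝ}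
    (hP : ∀ s a, P s a ∈ stdSimplex ℝ S) (hr : ∀ s a, |r s a| ≤ R) (hγ0 : 0 ≤ γ) (hγ1 : γ < 1)
    (hμ : ∀ s, 0 < μ0 s) (hd : ∀ s a, 0 ≤ dD s a) (hflow : BellmanFlow P μ0 γ dD)
    (hα : 0 ≤ α) (hBw : 1 < Bw) (hf : LipschitzOnWith K f (Set.Icc 0 Bw))
    (h : IsSaddleB P r μ0 γ dD f α Bw v w) (s : S) : |v s| ≤ (α * K + R) / (1 - γ) := by
  have hP0 : ∀ s a s', 0 ≤ P s a s' := fun s a => (hP s a).1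
  refine abs_le_of_forall_exists_eV hP hγ0 hγ1 hr (fun s => ?_) (fun s => ?_) s
  · obtain ⟨a, hda, hwa⟩ := h.exists_pos hP0 hγ0 hγ1 (hμ s) hd
    exact ⟨a, h.neg_le_eV_of_pos hα hf hda hwa⟩
  · obtain ⟨a, hda, hwa⟩ := h.exists_lt hP0 hγ0 hγ1 (hμ s) hd hflow hBw
    exact ⟨a, h.eV_le_of_lt hα hf hda hwa⟩

namespace MDPAssumptions

variable {P : S → A → S → ℝ} {r : S → A → ℝ} {μ0 : S → ℝ} {γ : ℝ} {dD : S → A → ℝ}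

theorem P_mem_stdSimplex (h : MDPAssumptions P r μ0 γ dD) (s : S) (a : A) :
    P s a ∈ stdSimplex ℝ S :=
  ⟨h.P_nonneg s a, h.P_sum s a⟩

theorem abs_r_le_one (h : MDPAssumptions P r μ0 γ dD) (s : S) (a : A) : |r s a| ≤ 1 :=
  (abs_of_nonneg (h.r_nonneg s a)).trans_le (h.r_le_one s a)

theorem bellmanFlow_of_eq_occ [Nonempty A] (h : MDPAssumptions P r μ0 γ dD)
    (hocc : ∀ s a, dD s a = occ P μ0 γ (behPolicy dD) s a) : BellmanFlow P μ0 γ dD := by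
  have hflow : BellmanFlow P μ0 γ (occ P μ0 γ (behPolicy dD)) :=
    bellmanFlow_occ h.P_mem_stdSimplex (isPolicy_normPolicy h.dD_nonneg) h.γ_nonneg h.γ_lt_one
  rwa [← funext₂ hocc] at hflow

end MDPAssumptions

/-- Lemma 2: boundedness of the optimal dual variable `v*_{α,B_w}`
of the constrained & regularized LP. -/
theorem stmt6
    {S A : Type*} [Fintype S] [Fintype A] [Nonempty S] [Nonempty A]
    (P : S → A → S → ℝ) (r : S → A → ℝ) (μ0 : S → ℝ) (γ : ℝ) (dD : S → A → ℝ)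
    (hMDP : MDPAssumptions P r μ0 γ dD)
    -- the data distribution is the occupancy of the behavior policy
    (hocc : ∀ s a, dD s a = occ P μ0 γ (behPolicy dD) s a)
    (f f' : ℝ → ℝ) (α Bw Mf Bf' : ℝ) (hα : 0 < α) (hBw : 1 < Bw)
    (hderiv : ∀ x, HasDerivAt f (f' x) x) (hMf : 0 < Mf)
    (hsc : StrongConvexOn Set.univ Mf f)
    (hBf' : ∀ x, 0 ≤ x → x ≤ Bw → |f' x| ≤ Bf')
    (vst : S → ℝ) (wst : S → A → ℝ)
    (hsad : IsSaddleB P r μ0 γ dD f α Bw vst wst) :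
    ∀ s, |vst s| ≤ (α * Bf' + 1) / (1 - γ) := by
  lift Bf' to NNReal using (abs_nonneg _).trans (hBf' 0 le_rfl (zero_le_one.trans hBw.le))
  have hlip : LipschitzOnWith Bf' f (Set.Icc 0 Bw) :=
    (convex_Icc 0 Bw).lipschitzOnWith_of_nnnorm_hasDerivWithin_le
      (fun x _ => (hderiv x).hasDerivWithinAt) fun x hx => hBf' x hx.1 hx.2
  exact stmt6_general hMDP.P_mem_stdSimplex hMDP.abs_r_le_one hMDP.γ_nonneg hMDP.γ_lt_one
    hMDP.μ0_pos hMDP.dD_nonneg (hMDP.bellmanFlow_of_eq_occ hocc) hα.le hBw hlip hsad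

end ProRL
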